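/- arXiv:2208.13871 — 3 statements merged into one kernel-verified Lean document; each statement's English description precedes it below -/
import Mathlib

section
/- (Coordinate-wise characterization of the treatment Markov boundary.) Let A be a random variable and V = (V_i)_{i ∈ I} a finite family of random variables such that the joint law of (A, (V_i)_{i ∈ I}) is absolutely continuous with respect to P_A ⊗ ⨂_{i ∈ I} P_{V_i} with a density that is positive almost everywhere. Then for every J ⊆ I, the treatment Markov boundary of the subfamily (V_i)_{i ∈ J} satisfies R_A(V_J) = {i ∈ J : A is NOT conditionally independent of V_i given V_{J ∖ {i}}}. -/
/-!
The boundary is *defined* as the intersection of all blankets, so the identity reduces to deciding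
which blankets can miss a given index `i`.

* **Weak union** (`CondIndepGiven.weak_union`): if `A ⊥⊥ Y | W`, then `A ⊥⊥ U | Z` whenever
  `σ(W) ≤ σ(Z) ≤ σ(W, Y)` and `U` is `σ(W, Y)`-measurable.  With `W = V_{J'}`, `Y = V_{J∖J'}`,
  `Z = V_{J∖{i}}` and `U = V_i`, a blanket `J'` of `V_J` that misses `i ∈ J` forces
  `A ⊥⊥ V_i | V_{J∖{i}}`.  So every `i` in the right-hand side lies in every blanket.
* Conversely `J` itself is a blanket, so the boundary is contained in `J`, and if
  `A ⊥⊥ V_i | V_{J∖{i}}` with `i ∈ J`, then `J ∖ {i}` is a blanket missing `i`.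
-/

open MeasureTheory ProbabilityTheory

/-- `X ⊥⊥ Y | W` under `μ`: conditional independence of the random elements `X` and `Y`
given the σ-algebra generated by the random element `W`. -/
def CondIndepGiven {Ω α β γ : Type*} [mΩ : MeasurableSpace Ω] [StandardBorelSpace Ω]
    [MeasurableSpace α] [MeasurableSpace β] [MeasurableSpace γ]
    (μ : Measure Ω) [IsFiniteMeasure μ]
    (X : Ω → α) (Y : Ω → β) (W : Ω → γ) : Prop :=
  ∃ hle : MeasurableSpace.comap W inferInstance ≤ mΩ,
    CondIndepFun (MeasurableSpace.comap W inferInstance) hle X Y μ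

/-- The subvector `(V_i)_{i ∈ J}` of a family of random variables. -/
def subvec {Ω I : Type*} (V : I → Ω → ℝ) (J : Set I) : Ω → (J → ℝ) :=
  fun ω j => V j ω

/-- The joint law of `(V_i)_{i ∈ I}` is absolutely continuous w.r.t. the product
`⨂_{i ∈ I} P_{V_i}` of its one-dimensional marginal laws, with a density that is positive
almost everywhere. -/
def PositiveFamilyDensity {Ω I : Type*} [MeasurableSpace Ω] [Fintype I]
    (μ : Measure Ω) (V : I → Ω → ℝ) : Prop :=
  μ.map (fun ω i => V i ω) ≪ Measure.pi (fun i => μ.map (V i)) ∧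
    ∀ᵐ x ∂(Measure.pi fun i => μ.map (V i)),
      0 < (μ.map (fun ω i => V i ω)).rnDeriv (Measure.pi fun i => μ.map (V i)) x

/-- The joint law of `(W, (V_i)_{i ∈ I})` is absolutely continuous w.r.t. the product
`P_W ⊗ ⨂_{i ∈ I} P_{V_i}` of its one-dimensional marginal laws, with a density that is
positive almost everywhere. -/
def PositivePairDensity {Ω α I : Type*} [MeasurableSpace Ω] [MeasurableSpace α] [Fintype I]
    (μ : Measure Ω) (W : Ω → α) (V : I → Ω → ℝ) : Prop :=
  μ.map (fun ω => (W ω, fun i => V i ω)) ≪ (μ.map W).prod (Measure.pi fun i => μ.map (V i)) ∧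
    ∀ᵐ x ∂((μ.map W).prod (Measure.pi fun i => μ.map (V i))),
      0 < (μ.map (fun ω => (W ω, fun i => V i ω))).rnDeriv
            ((μ.map W).prod (Measure.pi fun i => μ.map (V i))) x

/-- The joint law of `(W, U, (V_i)_{i ∈ I})` is absolutely continuous w.r.t. the product
`P_W ⊗ P_U ⊗ ⨂_{i ∈ I} P_{V_i}` of its one-dimensional marginal laws, with a density that is
positive almost everywhere. -/
def PositiveTripleDensity {Ω I : Type*} [MeasurableSpace Ω] [Fintype I]
    (μ : Measure Ω) (W U : Ω → ℝ) (V : I → Ω → ℝ) : Prop :=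
  μ.map (fun ω => (W ω, U ω, fun i => V i ω)) ≪
      (μ.map W).prod ((μ.map U).prod (Measure.pi fun i => μ.map (V i))) ∧
    ∀ᵐ x ∂((μ.map W).prod ((μ.map U).prod (Measure.pi fun i => μ.map (V i)))),
      0 < (μ.map (fun ω => (W ω, U ω, fun i => V i ω))).rnDeriv
            ((μ.map W).prod ((μ.map U).prod (Measure.pi fun i => μ.map (V i)))) x

/-- `J ∈ 𝔯_A(V)`: `J` is a treatment Markov blanket of the family `V`,
i.e. `A ⊥⊥ V_{I∖J} | V_J`. -/
def IsTreatBlanket {Ω I : Type*} [MeasurableSpace Ω] [StandardBorelSpace Ω]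
    (μ : Measure Ω) [IsFiniteMeasure μ] (A : Ω → ℝ) (V : I → Ω → ℝ) (J : Set I) : Prop :=
  CondIndepGiven μ A (subvec V (Set.univ \ J)) (subvec V J)

/-- `J ∈ 𝔯_{Y|A}(V)`: `J` is an outcome Markov blanket of the family `V`,
i.e. `Y ⊥⊥ V_{I∖J} | (A, V_J)`. -/
def IsOutBlanket {Ω I : Type*} [MeasurableSpace Ω] [StandardBorelSpace Ω]
    (μ : Measure Ω) [IsFiniteMeasure μ] (A Y : Ω → ℝ) (V : I → Ω → ℝ) (J : Set I) : Prop :=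
  CondIndepGiven μ Y (subvec V (Set.univ \ J)) (fun ω => (A ω, subvec V J ω))

/-- `R_A(V_J)`: the treatment Markov boundary of the subfamily `(V_i)_{i ∈ J}`, i.e. the
intersection of all `J' ⊆ J` such that `A ⊥⊥ V_{J∖J'} | V_{J'}`. -/
def treatBoundary {Ω I : Type*} [MeasurableSpace Ω] [StandardBorelSpace Ω]
    (μ : Measure Ω) [IsFiniteMeasure μ] (A : Ω → ℝ) (V : I → Ω → ℝ) (J : Set I) : Set I :=
  ⋂₀ {J' : Set I | J' ⊆ J ∧ CondIndepGiven μ A (subvec V (J \ J')) (subvec V J')}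

/-- `R_{Y|A}(V_J)`: the outcome Markov boundary of the subfamily `(V_i)_{i ∈ J}`, i.e. the
intersection of all `J' ⊆ J` such that `Y ⊥⊥ V_{J∖J'} | (A, V_{J'})`. -/
def outBoundary {Ω I : Type*} [MeasurableSpace Ω] [StandardBorelSpace Ω]
    (μ : Measure Ω) [IsFiniteMeasure μ] (A Y : Ω → ℝ) (V : I → Ω → ℝ) (J : Set I) : Set I :=
  ⋂₀ {J' : Set I | J' ⊆ J ∧
        CondIndepGiven μ Y (subvec V (J \ J')) (fun ω => (A ω, subvec V J' ω))}

/-- `A` is a binary treatment taking values in `{0, 1}`. -/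
def IsBinary {Ω : Type*} (A : Ω → ℝ) : Prop :=
  ∀ ω, A ω = 0 ∨ A ω = 1

/-- Consistency of the observed outcome `Y` with the potential outcomes `Y₀, Y₁`:
`Y = Y₁` a.s. on `{A = 1}` and `Y = Y₀` a.s. on `{A = 0}`. -/
def Consistency {Ω : Type*} [MeasurableSpace Ω] (μ : Measure Ω) (A Y Y0 Y1 : Ω → ℝ) : Prop :=
  (∀ᵐ ω ∂μ, A ω = 1 → Y ω = Y1 ω) ∧ (∀ᵐ ω ∂μ, A ω = 0 → Y ω = Y0 ω)

/-- The random vector `C` controls for confounding: `Y_a ⊥⊥ A | C` for `a = 0, 1`. -/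
def ControlsConfounding {Ω γ : Type*} [MeasurableSpace Ω] [StandardBorelSpace Ω]
    [MeasurableSpace γ] (μ : Measure Ω) [IsFiniteMeasure μ]
    (A Y0 Y1 : Ω → ℝ) (C : Ω → γ) : Prop :=
  CondIndepGiven μ Y0 A C ∧ CondIndepGiven μ Y1 A C

/-- If `X ⊥⊥ Y | W`, adding `Y` to the conditioning variables does not change the conditional
probabilities of events determined by `X`. -/
lemma condExp_prod_eq_of_condIndepFun {Ω α β γ : Type*} [MeasurableSpace Ω]
    [StandardBorelSpace Ω] [MeasurableSpace α] [StandardBorelSpace α] [Nonempty α]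
    [MeasurableSpace β] [StandardBorelSpace β] [Nonempty β] [mγ : MeasurableSpace γ]
    {μ : Measure Ω} [IsFiniteMeasure μ] {X : Ω → α} {Y : Ω → β} {W : Ω → γ}
    (hX : Measurable X) (hY : Measurable Y) (hW : Measurable W)
    (h : CondIndepFun (mγ.comap W) hW.comap_le X Y μ) {s : Set α} (hs : MeasurableSet s) :
    μ⟦X ⁻¹' s | MeasurableSpace.comap (fun ω => (W ω, Y ω)) inferInstance⟧
      =ᵐ[μ] μ⟦X ⁻¹' s | mγ.comap W⟧ := by
  have h1 := (condIndepFun_iff_condDistrib_prod_ae_eq_prodMkRight hX hY hW).1 h.symm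
  have h2 := ae_of_ae_map (hW.prodMk hY).aemeasurable h1
  filter_upwards [h2, condDistrib_ae_eq_condExp (μ := μ) (hW.prodMk hY) hX hs,
    condDistrib_ae_eq_condExp (μ := μ) hW hX hs] with ω h3 h4 h5
  rw [← h4, ← h5, h3, Kernel.prodMkRight_apply]

lemma CondIndepGiven.weak_union {Ω α β γ δ ε : Type*} [MeasurableSpace Ω]
    [StandardBorelSpace Ω] [MeasurableSpace α] [StandardBorelSpace α] [Nonempty α]
    [MeasurableSpace β] [StandardBorelSpace β] [Nonempty β] [mγ : MeasurableSpace γ]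
    [mδ : MeasurableSpace δ] [MeasurableSpace ε]
    {μ : Measure Ω} [IsFiniteMeasure μ] {X : Ω → α} {Y : Ω → β} {W : Ω → γ}
    {Z : Ω → δ} {U : Ω → ε}
    (hX : Measurable X) (hY : Measurable Y) (hW : Measurable W)
    (hWZ : mγ.comap W ≤ mδ.comap Z)
    (hZ : Measurable[MeasurableSpace.comap (fun ω => (W ω, Y ω)) inferInstance] Z)
    (hU : Measurable[MeasurableSpace.comap (fun ω => (W ω, Y ω)) inferInstance] U)
    (h : CondIndepGiven μ X Y W) : CondIndepGiven μ X U Z := by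
  obtain ⟨_, h⟩ := h
  have hM := (hW.prodMk hY).comap_le
  have hZM := hZ.comap_le
  refine ⟨hZM.trans hM, ?_⟩
  rw [condIndepFun_iff _ _ _ _ hX (hU.mono hM le_rfl)]
  rintro _ t ⟨s, hs, rfl⟩ ht
  have htM := hU.comap_le t ht
  have hs' : MeasurableSet (X ⁻¹' s) := hX hs
  have key := condExp_prod_eq_of_condIndepFun hX hY hW h hs
  generalize X ⁻¹' s = S at hs' key ⊢
  have hint : ∀ {T : Set Ω}, MeasurableSet T → Integrable (T.indicator fun _ => (1 : ℝ)) μ :=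
    fun hT => (integrable_const _).indicator hT
  set M := MeasurableSpace.comap (fun ω => (W ω, Y ω)) inferInstance with hMdef
  -- `P(S | W)` is `σ(Z)`-measurable and equals `P(S | W, Y)`, hence it is also `P(S | Z)`.
  have hSZ : μ⟦S | mδ.comap Z⟧ =ᵐ[μ] μ⟦S | mγ.comap W⟧ :=
    calc μ⟦S | mδ.comap Z⟧ =ᵐ[μ] μ[μ⟦S | M⟧ | mδ.comap Z] :=
          (condExp_condExp_of_le hZM hM).symm
      _ =ᵐ[μ] μ[μ⟦S | mγ.comap W⟧ | mδ.comap Z] := condExp_congr_ae key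
      _ =ᵐ[μ] μ⟦S | mγ.comap W⟧ := by
          rw [condExp_of_stronglyMeasurable (hZM.trans hM)
            (stronglyMeasurable_condExp.mono hWZ) integrable_condExp]
  have hST : (S ∩ t).indicator (fun _ => (1 : ℝ)) = t.indicator (S.indicator fun _ => (1 : ℝ)) := by
    rw [Set.indicator_indicator, Set.inter_comm]
  have hprod : t.indicator (μ⟦S | mδ.comap Z⟧)
      = μ⟦S | mδ.comap Z⟧ * t.indicator (fun _ => (1 : ℝ)) := by
    ext ω
    by_cases hω : ω ∈ t <;> simp [hω]
  calc μ⟦S ∩ t | mδ.comap Z⟧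
      =ᵐ[μ] μ[μ⟦S ∩ t | M⟧ | mδ.comap Z] := (condExp_condExp_of_le hZM hM).symm
    _ =ᵐ[μ] μ[t.indicator (μ⟦S | M⟧) | mδ.comap Z] := by
        rw [hST]
        exact condExp_congr_ae (condExp_indicator (hint hs') htM)
    _ =ᵐ[μ] μ[t.indicator (μ⟦S | mδ.comap Z⟧) | mδ.comap Z] := by
        refine condExp_congr_ae ?_
        filter_upwards [key, hSZ] with ω h1 h2
        by_cases hω : ω ∈ t <;> simp [hω, h1, h2]
    _ =ᵐ[μ] μ⟦S | mδ.comap Z⟧ * μ⟦t | mδ.comap Z⟧ := by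
        have hi : Integrable (t.indicator (μ⟦S | mδ.comap Z⟧)) μ :=
          integrable_condExp.indicator (hM t htM)
        rw [hprod] at hi ⊢
        exact condExp_mul_of_stronglyMeasurable_left stronglyMeasurable_condExp hi
          (hint (hM t htM))

lemma measurable_subvec {Ω I : Type*} {m : MeasurableSpace Ω} {V : I → Ω → ℝ} {J : Set I}
    (hV : ∀ i ∈ J, Measurable (V i)) : Measurable (subvec V J) :=
  measurable_pi_lambda _ fun j => hV j j.2

/-- Each coordinate `V_i`, `i ∈ J`, is measurable for any σ-algebra making `V_J` measurable. -/
lemma measurable_of_subvec {Ω I : Type*} {m : MeasurableSpace Ω} {V : I → Ω → ℝ} {J : Set I}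
    (h : Measurable (subvec V J)) {i : I} (hi : i ∈ J) : Measurable (V i) :=
  (measurable_pi_apply (⟨i, hi⟩ : J)).comp h

/-- Coordinate-wise characterization of the treatment Markov boundary:
`R_A(V_J) = {i ∈ J : A is not conditionally independent of V_i given V_{J ∖ {i}}}`. -/
theorem treatBoundary_coordinatewise
    {Ω I : Type*} [MeasurableSpace Ω] [StandardBorelSpace Ω] [Fintype I]
    (μ : Measure Ω) [IsProbabilityMeasure μ]
    (A : Ω → ℝ) (V : I → Ω → ℝ)
    (hA : Measurable A) (hV : ∀ i, Measurable (V i))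
    (hpos : PositivePairDensity μ A V)
    (J : Set I) :
    treatBoundary μ A V J
      = {i | i ∈ J ∧ ¬ CondIndepGiven μ A (V i) (subvec V (J \ {i}))} := by
  have hsub : ∀ K : Set I, Measurable (subvec V K) := fun K => measurable_subvec fun i _ => hV i
  ext i
  simp only [treatBoundary, Set.mem_sInter, Set.mem_ofPred_eq]
  constructor
  · intro h
    have hiJ : i ∈ J := by
      refine h J ⟨subset_rfl, (hsub J).comap_le, ?_⟩
      refine condIndepFun_of_measurable_right hA (measurable_subvec fun j hj => ?_)
      exact absurd hj.1 hj.2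
    refine ⟨hiJ, fun hci => ?_⟩
    refine (h (J \ {i}) ⟨Set.sdiff_subset, ?_⟩).2 rfl
    obtain ⟨hle, hci⟩ := hci
    -- `J ∖ (J ∖ {i})` is the singleton `{i}`, so the removed subvector is a function of `V_i`.
    have hfun : subvec V (J \ (J \ {i}))
        = (fun (x : ℝ) (_ : (J \ (J \ {i}) : Set I)) => x) ∘ V i := by
      funext ω ⟨j, hj⟩
      have hji : j = i := by
        by_contra hne
        exact hj.2 ⟨hj.1, hne⟩
      simp [subvec, hji]
    refine ⟨hle, ?_⟩
    rw [hfun]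
    exact hci.comp measurable_id (measurable_pi_lambda _ fun _ => measurable_id)
  · rintro ⟨hiJ, hni⟩ J' ⟨hJ', hci⟩
    by_contra hiJ'
    apply hni
    have hpair := comap_measurable (m := inferInstance)
      (fun ω => (subvec V J' ω, subvec V (J \ J') ω))
    have hcoord : ∀ j ∈ J, Measurable[MeasurableSpace.comap
        (fun ω => (subvec V J' ω, subvec V (J \ J') ω)) inferInstance] (V j) := by
      intro j hj
      by_cases hj' : j ∈ J'
      · exact measurable_of_subvec (measurable_fst.comp hpair) hj'
      · exact measurable_of_subvec (measurable_snd.comp hpair) (J := J \ J') ⟨hj, hj'⟩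
    refine hci.weak_union hA (hsub _) (hsub _) ?_
      (measurable_subvec fun j hj => hcoord j hj.1) (hcoord i hiJ)
    refine Measurable.comap_le (measurable_subvec fun j hj => ?_)
    refine measurable_of_subvec (comap_measurable (subvec V (J \ {i}))) ⟨hJ' hj, ?_⟩
    rintro rfl
    exact hiJ' hj
end

section
/- (Back-door adjustment formula.) Let A be a binary treatment with potential outcomes Y_0, Y_1, let the observed outcome Y satisfy consistency, and let C be a random vector such that Y_a ⊥⊥ A | C for a = 0, 1 (C controls for confounding) and 0 < P(A = 1 | C) < 1 almost surely. Let κ be a regular conditional distribution of Y given (A, C). Then for every a ∈ {0, 1} and every measurable set B in the outcome space, P(Y_a ∈ B) = E[κ((a, C), B)]; that is, the law of the potential outcome Y_a is identified by adjusting for C. -/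
/-!
The core is a pointwise identity for one treatment level `a`: almost surely,
`κ((a, C), B) = P(Y_a ∈ B | C)`. On `{A = a}` the kernel `κ((a, C), B)` agrees with
`P(Y ∈ B | A, C)`, and consistency replaces `Y` by `Y_a` there; averaging over `A` given `C`
(tower property) and using `Y_a ⊥⊥ A | C` yields
`κ((a, C), B) P(A = a | C) = P(Y_a ∈ B | C) P(A = a | C)`.
Overlap makes the factor `P(A = a | C)` positive, so it cancels, and taking expectations gives
the adjustment formula. The two treatment levels differ only in how overlap is read off, since
`P(A = 0 | C) = 1 - P(A = 1 | C)`.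
-/

open MeasureTheory ProbabilityTheory

/-- The adjustment formula at a single treatment level `a`, which needs neither that `A` is binary
nor overlap at the other levels. -/
lemma backdoor_at_level
    {Ω γ : Type*} [mΩ : MeasurableSpace Ω] [StandardBorelSpace Ω] [mγ : MeasurableSpace γ]
    (μ : Measure Ω) [IsProbabilityMeasure μ]
    (A Y Ya : Ω → ℝ) (C : Ω → γ) (a : ℝ)
    (hA : Measurable A) (hY : Measurable Y) (hYa : Measurable Ya) (hC : Measurable C)
    (hcons : ∀ᵐ ω ∂μ, A ω = a → Y ω = Ya ω)
    (hctrl : CondIndepGiven μ Ya A C)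
    (hover : ∀ᵐ ω ∂μ, 0 < (μ[(A ⁻¹' {a}).indicator (fun _ => (1 : ℝ)) |
              MeasurableSpace.comap C inferInstance]) ω)
    (κ : Kernel (ℝ × γ) ℝ) [IsMarkovKernel κ] (B : Set ℝ) (hB : MeasurableSet B)
    (hκ : (fun ω => (κ (A ω, C ω) B).toReal) =ᵐ[μ]
        μ[(Y ⁻¹' B).indicator (fun _ => (1 : ℝ)) |
            MeasurableSpace.comap (fun ω => (A ω, C ω)) inferInstance]) :
    μ (Ya ⁻¹' B) = ∫⁻ ω, κ (a, C ω) B ∂μ := by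
  obtain ⟨hm, hind⟩ := hctrl
  set m : MeasurableSpace Ω := MeasurableSpace.comap C inferInstance with hm_def
  set m' : MeasurableSpace Ω :=
    MeasurableSpace.comap (fun ω => (A ω, C ω)) inferInstance with hm'_def
  have hm' : m' ≤ mΩ := (hA.prodMk hC).comap_le
  have hAC : Measurable[m'] (fun ω => (A ω, C ω)) := comap_measurable _
  have hmm' : m ≤ m' := by
    have hCm' : Measurable[m'] C := measurable_snd.comp hAC
    exact hCm'.comap_le
  have hsA' : MeasurableSet[m'] (A ⁻¹' {a}) := by
    have hAm' : Measurable[m'] A := measurable_fst.comp hAC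
    exact hAm' (measurableSet_singleton a)
  have hsA : MeasurableSet[mΩ] (A ⁻¹' {a}) := hm' _ hsA'
  set g : Ω → ℝ := fun ω => (κ (a, C ω) B).toReal with hg_def
  have hg_meas : Measurable[m] g := by
    have h1 : Measurable (fun c : γ => (κ (a, c) B).toReal) :=
      ((κ.measurable_coe hB).comp measurable_prodMk_left).ennreal_toReal
    exact h1.comp (comap_measurable C)
  have hg_le : ∀ ω, ‖g ω‖ ≤ 1 := fun ω => by
    rw [Real.norm_of_nonneg ENNReal.toReal_nonneg]
    exact ENNReal.toReal_le_of_le_ofReal zero_le_one (by simpa using prob_le_one)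
  have hg_int : Integrable g μ :=
    Integrable.of_bound (hg_meas.mono hm le_rfl).aestronglyMeasurable 1 (ae_of_all _ hg_le)
  have hone : ∀ s : Set Ω, MeasurableSet[mΩ] s → Integrable (s.indicator (fun _ => (1 : ℝ))) μ :=
    fun s hs => (integrable_const _).indicator hs
  -- On `{A = a}`, `g` is the conditional probability of `Y ∈ B`, hence of `Ya ∈ B`.
  have hlevel : (A ⁻¹' {a}).indicator g =ᵐ[μ]
      μ[(Ya ⁻¹' B ∩ A ⁻¹' {a}).indicator (fun _ => (1 : ℝ)) | m'] := by
    have h1 : (A ⁻¹' {a}).indicator g =ᵐ[μ]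
        (A ⁻¹' {a}).indicator (μ[(Y ⁻¹' B).indicator (fun _ => (1 : ℝ)) | m']) := by
      filter_upwards [hκ] with ω hω
      by_cases h : A ω = a
      · have h' : ω ∈ A ⁻¹' {a} := h
        simp only [Set.indicator_of_mem h', ← hω, hg_def, h]
      · have h' : ω ∉ A ⁻¹' {a} := h
        simp only [Set.indicator_of_notMem h']
    have h2 : (A ⁻¹' {a}).indicator ((Y ⁻¹' B).indicator (fun _ => (1 : ℝ))) =ᵐ[μ]
        (Ya ⁻¹' B ∩ A ⁻¹' {a}).indicator (fun _ => (1 : ℝ)) := by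
      filter_upwards [hcons] with ω hω
      by_cases h : A ω = a
      · have hYeq := hω h
        by_cases hy : Ya ω ∈ B <;> simp [Set.indicator, h, hYeq, hy]
      · simp [Set.indicator, h]
    exact h1.trans ((condExp_indicator (hone _ (hY hB)) hsA').symm.trans (condExp_congr_ae h2))
  have htower : μ[(A ⁻¹' {a}).indicator g | m] =ᵐ[μ]
      μ[(Ya ⁻¹' B ∩ A ⁻¹' {a}).indicator (fun _ => (1 : ℝ)) | m] :=
    (condExp_congr_ae hlevel).trans (condExp_condExp_of_le hmm' hm')
  have hpull : μ[(A ⁻¹' {a}).indicator g | m] =ᵐ[μ]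
      g * μ[(A ⁻¹' {a}).indicator (fun _ => (1 : ℝ)) | m] := by
    have heq : (A ⁻¹' {a}).indicator g = g * (A ⁻¹' {a}).indicator (fun _ => (1 : ℝ)) := by
      ext ω
      by_cases h : A ω = a <;> simp [Set.indicator, h]
    rw [heq]
    refine condExp_mul_of_stronglyMeasurable_left hg_meas.stronglyMeasurable ?_ (hone _ hsA)
    rw [← heq]
    exact hg_int.indicator hsA
  have hprod := (condIndepFun_iff_condExp_inter_preimage_eq_mul hYa hA).1 hind B {a} hB
    (measurableSet_singleton a)
  have hkey : g =ᵐ[μ] μ[(Ya ⁻¹' B).indicator (fun _ => (1 : ℝ)) | m] := by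
    filter_upwards [htower, hpull, hprod, hover] with ω h1 h2 h3 h4
    refine mul_right_cancel₀ h4.ne' ?_
    rw [h1, h3] at h2
    exact h2.symm
  have hint : ∫ ω, g ω ∂μ = μ.real (Ya ⁻¹' B) := by
    rw [integral_congr_ae hkey, integral_condExp hm, integral_indicator_const _ (hYa hB)]
    simp
  rw [← ofReal_measureReal (measure_ne_top μ _), ← hint,
    ofReal_integral_eq_lintegral_ofReal hg_int (ae_of_all _ fun ω => ENNReal.toReal_nonneg)]
  exact lintegral_congr fun ω => ENNReal.ofReal_toReal (measure_ne_top _ _)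

/-- Back-door adjustment formula: if `C` controls for confounding and
`0 < P(A = 1 | C) < 1` a.s., then for a regular conditional distribution `κ` of `Y` given
`(A, C)`, the law of each potential outcome is identified:
`P(Y_a ∈ B) = E[κ((a, C), B)]` for `a = 0, 1`. -/
theorem backdoor_adjustment
    {Ω γ : Type*} [MeasurableSpace Ω] [StandardBorelSpace Ω]
    [MeasurableSpace γ] [StandardBorelSpace γ]
    (μ : Measure Ω) [IsProbabilityMeasure μ]
    (A Y Y0 Y1 : Ω → ℝ) (C : Ω → γ)
    (hA : Measurable A) (hY : Measurable Y) (hY0 : Measurable Y0) (hY1 : Measurable Y1)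
    (hC : Measurable C)
    (hbin : IsBinary A)
    (hcons : Consistency μ A Y Y0 Y1)
    (hctrl : ControlsConfounding μ A Y0 Y1 C)
    (hover : ∀ᵐ ω ∂μ,
      0 < (μ[(A ⁻¹' {1}).indicator (fun _ => (1 : ℝ)) |
              MeasurableSpace.comap C inferInstance]) ω ∧
        (μ[(A ⁻¹' {1}).indicator (fun _ => (1 : ℝ)) |
              MeasurableSpace.comap C inferInstance]) ω < 1)
    (κ : Kernel (ℝ × γ) ℝ) [IsMarkovKernel κ]
    (hκ : ∀ B : Set ℝ, MeasurableSet B →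
      (fun ω => (κ (A ω, C ω) B).toReal) =ᵐ[μ]
        μ[(Y ⁻¹' B).indicator (fun _ => (1 : ℝ)) |
            MeasurableSpace.comap (fun ω => (A ω, C ω)) inferInstance]) :
    (∀ B : Set ℝ, MeasurableSet B → μ (Y0 ⁻¹' B) = ∫⁻ ω, κ ((0 : ℝ), C ω) B ∂μ) ∧
    (∀ B : Set ℝ, MeasurableSet B → μ (Y1 ⁻¹' B) = ∫⁻ ω, κ ((1 : ℝ), C ω) B ∂μ) := by
  refine ⟨fun B hB => ?_, fun B hB => ?_⟩
  · refine backdoor_at_level μ A Y Y0 C 0 hA hY hY0 hC hcons.2 hctrl.1 ?_ κ B hB (hκ B hB)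
    have hsA : MeasurableSet (A ⁻¹' {1}) := hA (measurableSet_singleton 1)
    have heq : (A ⁻¹' {0}).indicator (fun _ => (1 : ℝ)) =
        (fun _ => (1 : ℝ)) - (A ⁻¹' {1}).indicator (fun _ => (1 : ℝ)) := by
      ext ω
      rcases hbin ω with h | h <;> simp [Set.indicator, h]
    have hsub := condExp_sub (μ := μ) (integrable_const (1 : ℝ))
      ((integrable_const (1 : ℝ)).indicator hsA) (MeasurableSpace.comap C inferInstance)
    rw [heq]
    filter_upwards [hsub, hover] with ω h1 h2
    rw [h1, Pi.sub_apply, condExp_const hC.comap_le]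
    linarith [h2.2]
  · exact backdoor_at_level μ A Y Y1 C 1 hA hY hY1 hC hcons.1 hctrl.2
      (hover.mono fun ω h => h.1) κ B hB (hκ B hB)
end

section
/- (Identification under weak control.) Let A be a treatment taking values in a finite set 𝒜 with potential outcomes (Y_a)_{a ∈ 𝒜}, and let the observed outcome Y satisfy consistency: Y = Y_a almost surely on the event {A = a} for each a ∈ 𝒜. Fix a ∈ 𝒜 and a random vector C, and suppose the weak control condition Y_a ⊥⊥ 1{A = a} | C holds together with P(A = a | C) > 0 almost surely. Let κ be a regular conditional distribution of Y given (A, C). Then for every measurable set B in the outcome space, P(Y_a ∈ B) = E[κ((a, C), B)]. -/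
/-!
Write `m = σ(C)`, `m₂ = σ(A, C)` and `k = κ((a, C), B)`. The product `1{A = a} · 1{Y_a ∈ B}` has two
expressions for its conditional expectation given `m`. Weak control gives
`P(Y_a ∈ B | C) · P(A = a | C)`. By consistency the product also equals `1{A = a} · 1{Y ∈ B}`, whose
conditional expectation given `m₂` is `1{A = a} · κ((A, C), B) = 1{A = a} · k`; since `k` is
`m`-measurable, the tower property gives `P(A = a | C) · k`. Dividing by `P(A = a | C) > 0` yields
`P(Y_a ∈ B | C) = k` almost surely, and taking expectations concludes.
-/

open MeasureTheory ProbabilityTheory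

/-- Identification under weak control: if `Y_a ⊥⊥ 1{A = a} | C` and
`P(A = a | C) > 0` a.s., then for a regular conditional distribution `κ` of `Y` given
`(A, C)`, `P(Y_a ∈ B) = E[κ((a, C), B)]`. -/
theorem weak_control_identification
    {Ω α γ : Type*} [MeasurableSpace Ω] [StandardBorelSpace Ω]
    [MeasurableSpace α] [MeasurableSingletonClass α] [Fintype α]
    [MeasurableSpace γ] [StandardBorelSpace γ]
    (μ : Measure Ω) [IsProbabilityMeasure μ]
    (A : Ω → α) (Y : Ω → ℝ) (Ypot : α → Ω → ℝ) (C : Ω → γ)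
    (hA : Measurable A) (hY : Measurable Y) (hYpot : ∀ b, Measurable (Ypot b))
    (hC : Measurable C)
    (hcons : ∀ b : α, ∀ᵐ ω ∂μ, A ω = b → Y ω = Ypot b ω)
    (a : α)
    (hweak : CondIndepGiven μ (Ypot a) ((A ⁻¹' {a}).indicator (fun _ => (1 : ℝ))) C)
    (hover : ∀ᵐ ω ∂μ,
      0 < (μ[(A ⁻¹' {a}).indicator (fun _ => (1 : ℝ)) |
              MeasurableSpace.comap C inferInstance]) ω)
    (κ : Kernel (α × γ) ℝ) [IsMarkovKernel κ]
    (hκ : ∀ B : Set ℝ, MeasurableSet B →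
      (fun ω => (κ (A ω, C ω) B).toReal) =ᵐ[μ]
        μ[(Y ⁻¹' B).indicator (fun _ => (1 : ℝ)) |
            MeasurableSpace.comap (fun ω => (A ω, C ω)) inferInstance]) :
    ∀ B : Set ℝ, MeasurableSet B → μ (Ypot a ⁻¹' B) = ∫⁻ ω, κ (a, C ω) B ∂μ := by
  intro B hB
  obtain ⟨hm, hind⟩ := hweak
  have hAC : Measurable (fun ω => (A ω, C ω)) := hA.prodMk hC
  have hsA : MeasurableSet (A ⁻¹' {a}) := hA (measurableSet_singleton a)
  have hsY : MeasurableSet (Y ⁻¹' B) := hY hB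
  have hsYa : MeasurableSet (Ypot a ⁻¹' B) := hYpot a hB
  set m : MeasurableSpace Ω := MeasurableSpace.comap C inferInstance with hm_def
  set m₂ : MeasurableSpace Ω :=
    MeasurableSpace.comap (fun ω => (A ω, C ω)) inferInstance with hm₂_def
  have hm₂ : m₂ ≤ _ := hAC.comap_le
  have hAC₂ : Measurable[m₂] (fun ω => (A ω, C ω)) := comap_measurable _
  have hmm₂ : m ≤ m₂ := (measurable_snd.comp hAC₂).comap_le
  set iA : Ω → ℝ := (A ⁻¹' {a}).indicator (fun _ => (1 : ℝ)) with hiA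
  set iY : Ω → ℝ := (Y ⁻¹' B).indicator (fun _ => (1 : ℝ)) with hiY
  set iYa : Ω → ℝ := (Ypot a ⁻¹' B).indicator (fun _ => (1 : ℝ)) with hiYa
  set k : Ω → ℝ := fun ω => (κ (a, C ω) B).toReal with hk
  have intA : Integrable iA μ := (integrable_const 1).indicator hsA
  have intY : Integrable iY μ := (integrable_const 1).indicator hsY
  have intYa : Integrable iYa μ := (integrable_const 1).indicator hsYa
  have hk_m : StronglyMeasurable[m] k := by
    have h : Measurable (fun c : γ => (κ (a, c) B).toReal) :=
      ((κ.measurable_coe hB).comp measurable_prodMk_left).ennreal_toReal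
    exact (h.comp (comap_measurable C)).stronglyMeasurable
  have hk_le : ∀ ω, ‖k ω‖ ≤ 1 := fun ω => by
    rw [Real.norm_of_nonneg ENNReal.toReal_nonneg]
    exact measureReal_le_one
  have hiA_le : ∀ ω, ‖iA ω‖ ≤ 1 := fun ω => by
    by_cases h : ω ∈ A ⁻¹' {a} <;> simp [hiA, h]
  have hiA_m₂ : StronglyMeasurable[m₂] iA :=
    stronglyMeasurable_const.indicator
      ((measurable_fst.comp hAC₂) (measurableSet_singleton a))
  have h_weak : μ[iA * iYa | m] =ᵐ[μ] μ[iYa | m] * μ[iA | m] := by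
    have h := (condIndepFun_iff_condExp_inter_preimage_eq_mul (hYpot a)
      (measurable_const.indicator hsA)).1 hind B {1} hB (measurableSet_singleton 1)
    have hpre : (iA ⁻¹' {1} : Set Ω) = A ⁻¹' {a} := by
      ext ω
      by_cases h : ω ∈ A ⁻¹' {a} <;> simp [hiA, Set.indicator, h]
    rw [hpre] at h
    have hprod : iA * iYa =
        (Ypot a ⁻¹' B ∩ A ⁻¹' {a}).indicator (fun _ => (1 : ℝ)) := by
      rw [mul_comm]
      exact (Set.inter_indicator_one (M₀ := ℝ)).symm
    rw [hprod]
    exact h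
  have h_cons : iA * iYa =ᵐ[μ] iA * iY := by
    filter_upwards [hcons a] with ω hω
    by_cases h : A ω = a
    · have h_mem : ω ∈ Ypot a ⁻¹' B ↔ ω ∈ Y ⁻¹' B := by
        rw [Set.mem_preimage, Set.mem_preimage, hω h]
      have h_val : iYa ω = iY ω := by
        by_cases hB' : ω ∈ Y ⁻¹' B
        · rw [hiYa, hiY, Set.indicator_of_mem (h_mem.2 hB'), Set.indicator_of_mem hB']
        · rw [hiYa, hiY, Set.indicator_of_notMem (mt h_mem.1 hB'), Set.indicator_of_notMem hB']
      rw [Pi.mul_apply, Pi.mul_apply, h_val]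
    · simp [hiA, h]
  have h_fine : μ[iA * iY | m₂] =ᵐ[μ] k * iA := by
    filter_upwards [condExp_stronglyMeasurable_mul_of_bound hm₂ hiA_m₂ intY 1 (.of_forall hiA_le),
      hκ B hB] with ω h1 h2
    rw [h1, Pi.mul_apply, Pi.mul_apply, ← h2]
    by_cases h : A ω = a
    · simp [hk, h, mul_comm]
    · simp [hiA, h]
  have h_id : μ[iA * iYa | m] =ᵐ[μ] k * μ[iA | m] :=
    calc μ[iA * iYa | m] =ᵐ[μ] μ[iA * iY | m] := condExp_congr_ae h_cons
      _ =ᵐ[μ] μ[μ[iA * iY | m₂] | m] := (condExp_condExp_of_le hmm₂ hm₂).symm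
      _ =ᵐ[μ] μ[k * iA | m] := condExp_congr_ae h_fine
      _ =ᵐ[μ] k * μ[iA | m] :=
        condExp_stronglyMeasurable_mul_of_bound hm hk_m intA 1 (.of_forall hk_le)
  have h_eq : μ[iYa | m] =ᵐ[μ] k := by
    filter_upwards [h_weak, h_id, hover] with ω h1 h2 h3
    exact mul_right_cancel₀ h3.ne' (h1.symm.trans h2)
  have h_int : μ.real (Ypot a ⁻¹' B) = ∫ ω, k ω ∂μ := by
    rw [← integral_congr_ae h_eq, integral_condExp hm, hiYa, integral_indicator_const _ hsYa]
    simp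
  have h_lint : ∫ ω, k ω ∂μ = (∫⁻ ω, κ (a, C ω) B ∂μ).toReal :=
    integral_toReal
      ((κ.measurable_coe hB).comp (measurable_const.prodMk hC)).aemeasurable
      (.of_forall fun ω => measure_lt_top _ _)
  have h_fin : ∫⁻ ω, κ (a, C ω) B ∂μ ≠ ⊤ := by
    refine ne_top_of_le_ne_top ENNReal.one_ne_top ?_
    calc ∫⁻ ω, κ (a, C ω) B ∂μ ≤ ∫⁻ _, 1 ∂μ := lintegral_mono fun ω => prob_le_one
      _ = 1 := by simp
  exact (ENNReal.toReal_eq_toReal_iff' (measure_ne_top _ _) h_fin).1 (h_int.trans h_lint)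
end
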